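/- Let V be an n-dimensional real inner product space (n ≥ 2), W a real inner product space, ζ : V × V → W a symmetric bilinear map, and T the tensor defined by the algebraic Gauss equation. Then for every orthonormal basis (e_1,…,e_n) of V, writing ζ_{ij} = ζ(e_i,e_j), τ_T = Σ_{1≤i<j≤n} T(e_i,e_j,e_j,e_i), C^{T,ζ} = (1/n) Σ_{i,j=1}^n ‖ζ_{ij}‖², and C^{T,ζ}(Π_{n−1}) = (1/(n−1)) Σ_{i,j=1}^{n−1} ‖ζ_{ij}‖² for the hyperplane Π_{n−1} spanned by e_1,…,e_{n−1}, one has 2τ_T/(n(n−1)) ≤ 2 C^{T,ζ} − ((2n−1)/(2n)) C^{T,ζ}(Π_{n−1}). In particular, the T-normalized scalar curvature (τ_T)_{Nor} = 2τ_T/(n(n−1)) is bounded above by the algebraic Casorati curvature δ̂_{C^{T,ζ}}(n−1) = 2C^{T,ζ} − ((2n−1)/(2n)) sup over hyperplanes of C^{T,ζ}(Π_{n−1}). -/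

import Mathlib

open RealInnerProductSpace

/-!
Writing `z i j = ζ (e i) (e j)`, the Gauss equation gives `2 τ = ‖∑ i, z i i‖² - ∑ i j, ‖z i j‖²`,
so everything reduces to an upper bound for the trace of `z`. Cauchy–Schwarz with weight `2` on the
`n - 1` diagonal entries inside the hyperplane and weight `1` on the remaining one bounds the
squared norm of the trace by `2 n - 1` times `½ ∑ i < n, ‖z i i‖² + ‖z n n‖²`. Adding the
off-diagonal entries can only increase this bound.
-/

open Finset

section Sums

variable {ι : Type*} [Fintype ι]

lemma two_nsmul_sum_sum_lt_of_symm [LinearOrder ι] {M : Type*} [AddCommMonoid M] (f : ι → ι → M)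
    (hsymm : ∀ i j, f i j = f j i) (hdiag : ∀ i, f i i = 0) :
    2 • ∑ i, ∑ j, (if i < j then f i j else 0) = ∑ i, ∑ j, f i j := by
  have hswap : ∑ i, ∑ j, (if i < j then f i j else 0) =
      ∑ i, ∑ j, (if j < i then f i j else 0) := by
    rw [sum_comm]
    simp only [hsymm]
  rw [two_nsmul]
  nth_rewrite 2 [hswap]
  simp only [← sum_add_distrib]
  refine sum_congr rfl fun i _ ↦ sum_congr rfl fun j _ ↦ ?_
  rcases lt_trichotomy i j with h | rfl | h
  · simp [h, h.not_gt]
  · simp [hdiag]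
  · simp [h, h.not_gt]

lemma norm_sum_sq_le_two_mul_card_add_card_compl [DecidableEq ι] {E : Type*}
    [SeminormedAddCommGroup E] (s : Finset ι) (x : ι → E) :
    ‖∑ i, x i‖ ^ 2 ≤
      (2 * (#s : ℝ) + #sᶜ) * ((∑ i ∈ s, ‖x i‖ ^ 2) / 2 + ∑ i ∈ sᶜ, ‖x i‖ ^ 2) := by
  let w : ι → ℝ := fun i ↦ if i ∈ s then 2 else 1
  have w_pos (i : ι) : 0 < w i := by
    dsimp only [w]
    split_ifs <;> norm_num
  have sum_w : ∑ i, w i = 2 * (#s : ℝ) + #sᶜ := by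
    simp [w, sum_ite, filter_notMem_eq_sdiff, compl_eq_univ_sdiff, mul_comm]
  have sum_div_w : ∑ i, ‖x i‖ ^ 2 / w i = (∑ i ∈ s, ‖x i‖ ^ 2) / 2 + ∑ i ∈ sᶜ, ‖x i‖ ^ 2 := by
    rw [← sum_add_sum_compl s, sum_div]
    congr 1
    · exact sum_congr rfl fun i hi ↦ by simp [w, hi]
    · exact sum_congr rfl fun i hi ↦ by simp [w, mem_compl.1 hi]
  calc ‖∑ i, x i‖ ^ 2 ≤ (∑ i, ‖x i‖) ^ 2 := by gcongr; exact norm_sum_le _ _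
    _ ≤ (∑ i, w i) * ∑ i, ‖x i‖ ^ 2 / w i :=
      sum_sq_le_sum_mul_sum_of_sq_le_mul _ (fun i _ ↦ (w_pos i).le)
        (fun i _ ↦ div_nonneg (sq_nonneg _) (w_pos i).le)
        fun i _ ↦ (mul_div_cancel₀ _ (w_pos i).ne').ge
    _ = _ := by rw [sum_w, sum_div_w]

lemma half_sum_diag_add_sum_diag_compl_le [DecidableEq ι] {a : ι → ι → ℝ} (ha : ∀ i j, 0 ≤ a i j)
    (s : Finset ι) :
    (∑ i ∈ s, a i i) / 2 + ∑ i ∈ sᶜ, a i i ≤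
      ∑ i, ∑ j, a i j - (∑ i ∈ s, ∑ j ∈ s, a i j) / 2 := by
  have diag_le : ∑ i ∈ s, a i i ≤ ∑ i ∈ s, ∑ j ∈ s, a i j :=
    sum_le_sum fun i hi ↦ single_le_sum (fun j _ ↦ ha i j) hi
  have diag_compl_le : ∑ i ∈ sᶜ, a i i ≤ ∑ i ∈ sᶜ, ∑ j, a i j :=
    sum_le_sum fun i _ ↦ single_le_sum (fun j _ ↦ ha i j) (mem_univ i)
  have block_le : ∑ i ∈ s, ∑ j ∈ s, a i j ≤ ∑ i ∈ s, ∑ j, a i j :=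
    sum_le_sum fun i _ ↦ sum_le_univ_sum_of_nonneg (ha i)
  linarith [sum_add_sum_compl s fun i ↦ ∑ j, a i j]

end Sums

section Casorati

variable {ι W : Type*} [SeminormedAddCommGroup W]

/-- The algebraic Casorati curvature of the coordinate subspace indexed by `s`, for a form with
components `z i j = ζ (e i) (e j)`. -/
noncomputable def casoratiCurvature (z : ι → ι → W) (s : Finset ι) : ℝ :=
  1 / (#s : ℝ) * ∑ i ∈ s, ∑ j ∈ s, ‖z i j‖ ^ 2

variable [Fintype ι]

lemma norm_trace_sq_le [DecidableEq ι] (z : ι → ι → W) (s : Finset ι) :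
    ‖∑ i, z i i‖ ^ 2 ≤ (2 * (#s : ℝ) + #sᶜ) *
      (∑ i, ∑ j, ‖z i j‖ ^ 2 - (∑ i ∈ s, ∑ j ∈ s, ‖z i j‖ ^ 2) / 2) :=
  (norm_sum_sq_le_two_mul_card_add_card_compl s fun i ↦ z i i).trans <|
    mul_le_mul_of_nonneg_left
      (half_sum_diag_add_sum_diag_compl_le (fun i j ↦ sq_nonneg ‖z i j‖) s) (by positivity)

variable [InnerProductSpace ℝ W] [LinearOrder ι]

/-- The `T`-scalar curvature `τ_T`, where `T` is given by the algebraic Gauss equation for a form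
with components `z i j = ζ (e i) (e j)`. -/
def gaussScalarCurvature (z : ι → ι → W) : ℝ :=
  ∑ i, ∑ j, if i < j then ⟪z i i, z j j⟫ - ⟪z i j, z j i⟫ else 0

lemma two_mul_gaussScalarCurvature {z : ι → ι → W} (hz : ∀ i j, z i j = z j i) :
    2 * gaussScalarCurvature z = ‖∑ i, z i i‖ ^ 2 - ∑ i, ∑ j, ‖z i j‖ ^ 2 := by
  have hsum := two_nsmul_sum_sum_lt_of_symm (fun i j ↦ ⟪z i i, z j j⟫ - ⟪z i j, z j i⟫)
    (fun i j ↦ by rw [real_inner_comm (z i i), real_inner_comm (z i j)]) (fun i ↦ sub_self _)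
  have htrace : ∑ i, ∑ j, ⟪z i i, z j j⟫ = ‖∑ i, z i i‖ ^ 2 := by
    rw [← real_inner_self_eq_norm_sq, sum_inner]
    simp only [inner_sum]
  have hnorm (i j : ι) : ⟪z i j, z j i⟫ = ‖z i j‖ ^ 2 := by
    rw [hz j i, real_inner_self_eq_norm_sq]
  rw [nsmul_eq_mul, Nat.cast_ofNat] at hsum
  rw [gaussScalarCurvature, hsum]
  simp only [hnorm, sum_sub_distrib, htrace]

theorem algebraic_casorati_inequality_delta_hat_general {z : ι → ι → W}
    (hz : ∀ i j, z i j = z j i) {n : ℕ} (hn : 2 ≤ n) (hι : Fintype.card ι = n) {s : Finset ι}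
    (hs : #s + 1 = n) :
    2 * gaussScalarCurvature z / ((n : ℝ) * ((n : ℝ) - 1)) ≤
      2 * casoratiCurvature z univ -
        ((2 * (n : ℝ) - 1) / (2 * (n : ℝ))) * casoratiCurvature z s := by
  have htrace := norm_trace_sq_le z s
  have card_s : (#s : ℝ) = n - 1 := by rw [← hs]; simp
  have card_compl_s : #sᶜ = 1 := by rw [card_compl]; omega
  have n_sub_one_pos : (0 : ℝ) < n - 1 := sub_pos.2 (by exact_mod_cast hn)
  rw [card_s, card_compl_s, Nat.cast_one] at htrace
  rw [two_mul_gaussScalarCurvature hz, casoratiCurvature, casoratiCurvature, card_univ, hι, card_s,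
    div_le_iff₀ (by positivity)]
  field_simp
  linarith

end Casorati

/-- STATEMENT 12: The normalized `T`-scalar curvature satisfies
`2τ_T/(n(n−1)) ≤ 2 C^{T,ζ} − ((2n−1)/(2n)) C^{T,ζ}(P_{n−1})` for every
orthonormal basis, where `P_{n−1}` is the hyperplane spanned by `e_1,…,e_{n−1}`. -/
theorem algebraic_casorati_inequality_delta_hat
    {V W : Type*} [NormedAddCommGroup V] [InnerProductSpace ℝ V]
    [FiniteDimensional ℝ V] [NormedAddCommGroup W] [InnerProductSpace ℝ W]
    (n : ℕ) (hn : 2 ≤ n) (e : OrthonormalBasis (Fin n) ℝ V)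
    (ζ : V →ₗ[ℝ] V →ₗ[ℝ] W) (hζ : ∀ X Y : V, ζ X Y = ζ Y X)
    (T : V → V → V → V → ℝ)
    (hT : ∀ X Y Z W' : V, T X Y Z W' = ⟪ζ X W', ζ Y Z⟫ - ⟪ζ X Z, ζ Y W'⟫)
    (τ C CP : ℝ)
    (hτ : τ = ∑ i : Fin n, ∑ j : Fin n,
        if i < j then T (e i) (e j) (e j) (e i) else 0)
    (hC : C = (1 / (n : ℝ)) * ∑ i : Fin n, ∑ j : Fin n, ‖ζ (e i) (e j)‖ ^ 2)
    (hCP : CP = (1 / ((n : ℝ) - 1)) *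
        ∑ i ∈ Finset.univ.filter (fun i : Fin n => (i : ℕ) < n - 1),
          ∑ j ∈ Finset.univ.filter (fun j : Fin n => (j : ℕ) < n - 1),
            ‖ζ (e i) (e j)‖ ^ 2) :
    2 * τ / ((n : ℝ) * ((n : ℝ) - 1)) ≤
      2 * C - ((2 * (n : ℝ) - 1) / (2 * (n : ℝ))) * CP := by
  have hs : (#{i : Fin n | (i : ℕ) < n - 1} : ℝ) = n - 1 := by
    rw [Fin.card_filter_val_lt, min_eq_right (Nat.sub_le n 1), Nat.cast_pred (by omega)]
  simpa only [gaussScalarCurvature, casoratiCurvature, hτ, hT, hC, hCP, hs, card_fin] using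
    algebraic_casorati_inequality_delta_hat_general (s := {i : Fin n | (i : ℕ) < n - 1})
      (fun i j ↦ hζ (e i) (e j)) hn (Fintype.card_fin n) (by rw [Fin.card_filter_val_lt]; omega)
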